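/- arXiv:2403.14605 — 5 statements merged into one kernel-verified Lean document; each statement's English description precedes it below -/
import Mathlib

section
/- Reuse of steering controllers (Remark 1): let C be an N-step control sequence and let I = (μ_I, Σ_I) and G = (μ_G, Σ_G) be pairs of means and real symmetric positive semidefinite covariances such that I →_N^C G. Then for every pair I⁻ = (μ_I, Σ') with Σ' real symmetric positive semidefinite and Σ' ⪯ Σ_I, the same control sequence satisfies I⁻ →_N^C G. -/
open Matrix

/-- Largest eigenvalue of a real symmetric matrix (junk value `0` if not symmetric). -/
noncomputable def lamMax {n : ℕ} (M : Matrix (Fin n) (Fin n) ℝ) : ℝ :=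
  if h : M.IsHermitian then ⨆ i, h.eigenvalues i else 0

/-- Smallest eigenvalue of a real symmetric matrix (junk value `0` if not symmetric). -/
noncomputable def lamMin {n : ℕ} (M : Matrix (Fin n) (Fin n) ℝ) : ℝ :=
  if h : M.IsHermitian then ⨅ i, h.eigenvalues i else 0

/-- Covariance dynamics `Σ_{k+1} = (A + B K_k) Σ_k (A + B K_k)ᵀ + D Dᵀ`. -/
def covSeq {n m : ℕ} (A : Matrix (Fin n) (Fin n) ℝ) (B : Matrix (Fin n) (Fin m) ℝ)
    (D : Matrix (Fin n) (Fin n) ℝ) (K : ℕ → Matrix (Fin m) (Fin n) ℝ)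
    (S0 : Matrix (Fin n) (Fin n) ℝ) : ℕ → Matrix (Fin n) (Fin n) ℝ
  | 0 => S0
  | k + 1 => (A + B * K k) * covSeq A B D K S0 k * (A + B * K k)ᵀ + D * Dᵀ

/-- Mean dynamics `μ_{k+1} = A μ_k + B v_k`. -/
def meanSeq {n m : ℕ} (A : Matrix (Fin n) (Fin n) ℝ) (B : Matrix (Fin n) (Fin m) ℝ)
    (v : ℕ → Fin m → ℝ) (mu0 : Fin n → ℝ) : ℕ → Fin n → ℝ
  | 0 => mu0
  | k + 1 => A.mulVec (meanSeq A B v mu0 k) + B.mulVec (v k)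

/-- Perturbation propagators `γ_0 = I`, `γ_{k+1} = (A + B K_k) γ_k (A + B K_k)ᵀ`. -/
def gammaSeq {n m : ℕ} (A : Matrix (Fin n) (Fin n) ℝ) (B : Matrix (Fin n) (Fin m) ℝ)
    (K : ℕ → Matrix (Fin m) (Fin n) ℝ) : ℕ → Matrix (Fin n) (Fin n) ℝ
  | 0 => 1
  | k + 1 => (A + B * K k) * gammaSeq A B K k * (A + B * K k)ᵀ

/-- A planning scene: state/control constraint data `α_x, β_x, c_x, α_u, β_u, c_u`
with `c_x, c_u ≥ 0`. -/
structure Scene (n m : ℕ) where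
  ax : Fin n → ℝ
  au : Fin m → ℝ
  bx : ℝ
  bu : ℝ
  cx : ℝ
  cu : ℝ
  cx_nonneg : 0 ≤ cx
  cu_nonneg : 0 ≤ cu

/-- `Steers A B D sc N K v μp Sp μq Sq` means `(μp, Sp) →_N^{(K, v)} (μq, Sq)`:
the mean and covariance trajectories initialized at `(μp, Sp)` and driven by the
control sequence `(K, v)` satisfy the state and control chance constraints for
`k = 0, …, N-1`, the terminal mean constraint `μ_N = μq`, and the terminal
covariance constraint `λ_max(Σ_N) ≤ λ_min(Σ_q)`. -/
def Steers {n m : ℕ} (A : Matrix (Fin n) (Fin n) ℝ) (B : Matrix (Fin n) (Fin m) ℝ)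
    (D : Matrix (Fin n) (Fin n) ℝ) (sc : Scene n m) (N : ℕ)
    (K : ℕ → Matrix (Fin m) (Fin n) ℝ) (v : ℕ → Fin m → ℝ)
    (μp : Fin n → ℝ) (Sp : Matrix (Fin n) (Fin n) ℝ)
    (μq : Fin n → ℝ) (Sq : Matrix (Fin n) (Fin n) ℝ) : Prop :=
  (∀ k < N, sc.cx * Real.sqrt (sc.ax ⬝ᵥ (covSeq A B D K Sp k).mulVec sc.ax)
      + sc.ax ⬝ᵥ meanSeq A B v μp k ≤ sc.bx) ∧
  (∀ k < N, sc.cu * Real.sqrt (sc.au ⬝ᵥ (K k * covSeq A B D K Sp k * (K k)ᵀ).mulVec sc.au)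
      + sc.au ⬝ᵥ v k ≤ sc.bu) ∧
  meanSeq A B v μp N = μq ∧
  lamMax (covSeq A B D K Sp N) ≤ lamMin Sq

/-- Concatenation of two (time-indexed) sequences: the first for steps `0,…,N-1`,
then the second, shifted by `N`. -/
def concatSeq {α : Type*} (N : ℕ) (f g : ℕ → α) : ℕ → α :=
  fun k => if k < N then f k else g (k - N)

/-- Concatenation of `d` sequences with lengths `Ns i`, applied consecutively. -/
def multiConcat {α : Type*} [Zero α] : (d : ℕ) → (Fin d → ℕ) → (Fin d → ℕ → α) → ℕ → α
  | 0, _, _ => fun _ => 0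
  | d + 1, Ns, fs =>
      concatSeq (Ns 0) (fs 0) (multiConcat d (fun i => Ns i.succ) (fun i => fs i.succ))

/-- `h`-hop backward reachable set of the distribution `(μ, S)`: all pairs
`(μ_q, Σ_q)` with `Σ_q` positive semidefinite from which some `h*N`-step control
sequence steers to `(μ, S)`. -/
def BRS {n m : ℕ} (A : Matrix (Fin n) (Fin n) ℝ) (B : Matrix (Fin n) (Fin m) ℝ)
    (D : Matrix (Fin n) (Fin n) ℝ) (sc : Scene n m) (h N : ℕ)
    (μ : Fin n → ℝ) (S : Matrix (Fin n) (Fin n) ℝ) :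
    Set ((Fin n → ℝ) × Matrix (Fin n) (Fin n) ℝ) :=
  { p | p.2.PosSemidef ∧
      ∃ (K : ℕ → Matrix (Fin m) (Fin n) ℝ) (v : ℕ → Fin m → ℝ),
        Steers A B D sc (h * N) K v p.1 p.2 μ S }

/-- A symmetric matrix is bounded above by its largest eigenvalue times the identity. -/
lemma lamMax_smul_one_sub_posSemidef {n : ℕ} {S : Matrix (Fin n) (Fin n) ℝ}
    (hS : S.IsHermitian) : (lamMax S • (1 : Matrix (Fin n) (Fin n) ℝ) - S).PosSemidef := by
  have hle : ∀ i, hS.eigenvalues i ≤ lamMax S := by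
    intro i
    rw [lamMax, dif_pos hS]
    exact le_ciSup (Set.finite_range _).bddAbove i
  set c := lamMax S
  have hU : (hS.eigenvectorUnitary : Matrix (Fin n) (Fin n) ℝ)
      * star (hS.eigenvectorUnitary : Matrix (Fin n) (Fin n) ℝ) = 1 :=
    Unitary.coe_mul_star_self _
  have hsp := hS.spectral_theorem
  rw [Unitary.conjStarAlgAut_apply] at hsp
  have hd : (diagonal (fun i => c - hS.eigenvalues i)).PosSemidef :=
    PosSemidef.diagonal (fun i => sub_nonneg.mpr (hle i))
  have hp := hd.mul_mul_conjTranspose_same (hS.eigenvectorUnitary : Matrix (Fin n) (Fin n) ℝ)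
  have e : diagonal (fun i => c - hS.eigenvalues i)
      = c • (1 : Matrix (Fin n) (Fin n) ℝ) - diagonal (RCLike.ofReal ∘ hS.eigenvalues) := by
    rw [smul_one_eq_diagonal, diagonal_sub]
    rfl
  rw [e, ← star_eq_conjTranspose, Matrix.mul_sub, Matrix.sub_mul, ← hsp, Matrix.mul_smul,
    Matrix.smul_mul, Matrix.mul_one, hU] at hp
  exact hp

/-- The quadratic form is monotone in the Loewner order. -/
lemma quad_mono {n : ℕ} {S T : Matrix (Fin n) (Fin n) ℝ} (h : (T - S).PosSemidef)
    (x : Fin n → ℝ) : x ⬝ᵥ S.mulVec x ≤ x ⬝ᵥ T.mulVec x := by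
  have := h.dotProduct_mulVec_nonneg x
  rw [sub_mulVec, dotProduct_sub, star_trivial] at this
  linarith

lemma lamMax_mono {n : ℕ} {S T : Matrix (Fin n) (Fin n) ℝ} (hS : S.IsHermitian)
    (hT : T.IsHermitian) (h : (T - S).PosSemidef) : lamMax S ≤ lamMax T := by
  rcases isEmpty_or_nonempty (Fin n) with hn | hn
  · rw [lamMax, lamMax, dif_pos hS, dif_pos hT]
    simp [Real.iSup_of_isEmpty]
  · conv_lhs => rw [lamMax, dif_pos hS]
    refine ciSup_le fun i => ?_
    have hp := h.add (lamMax_smul_one_sub_posSemidef hT)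
    rw [add_comm, sub_add_sub_cancel] at hp
    have hq := quad_mono hp (hS.eigenvectorBasis i)
    have h1 := hS.eigenvalues_eq i
    have h2 : (⇑(hS.eigenvectorBasis i) : Fin n → ℝ) ⬝ᵥ ⇑(hS.eigenvectorBasis i) = 1 := by
      have := EuclideanSpace.inner_eq_star_dotProduct (hS.eigenvectorBasis i)
        (hS.eigenvectorBasis i)
      rw [real_inner_self_eq_norm_sq, hS.eigenvectorBasis.orthonormal.1 i, star_trivial] at this
      simpa using this.symm
    rw [smul_mulVec, one_mulVec, dotProduct_smul, h2, smul_eq_mul, mul_one] at hq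
    rw [h1]
    simpa using hq

lemma conj_mono {n m : ℕ} {S T : Matrix (Fin n) (Fin n) ℝ} (h : (T - S).PosSemidef)
    (M : Matrix (Fin m) (Fin n) ℝ) : (M * T * Mᵀ - M * S * Mᵀ).PosSemidef := by
  have := h.mul_mul_conjTranspose_same M
  rwa [conjTranspose_eq_transpose_of_trivial, Matrix.mul_sub, Matrix.sub_mul] at this

lemma covSeq_posSemidef {n m : ℕ} (A : Matrix (Fin n) (Fin n) ℝ) (B : Matrix (Fin n) (Fin m) ℝ)
    (D : Matrix (Fin n) (Fin n) ℝ) (K : ℕ → Matrix (Fin m) (Fin n) ℝ)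
    {S : Matrix (Fin n) (Fin n) ℝ} (hS : S.PosSemidef) (k : ℕ) :
    (covSeq A B D K S k).PosSemidef := by
  induction k with
  | zero => exact hS
  | succ k ih =>
    have h1 := ih.mul_mul_conjTranspose_same (A + B * K k)
    have h2 := posSemidef_self_mul_conjTranspose D
    rw [conjTranspose_eq_transpose_of_trivial] at h1 h2
    exact h1.add h2

lemma covSeq_mono {n m : ℕ} (A : Matrix (Fin n) (Fin n) ℝ) (B : Matrix (Fin n) (Fin m) ℝ)
    (D : Matrix (Fin n) (Fin n) ℝ) (K : ℕ → Matrix (Fin m) (Fin n) ℝ)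
    {S T : Matrix (Fin n) (Fin n) ℝ} (h : (T - S).PosSemidef) (k : ℕ) :
    (covSeq A B D K T k - covSeq A B D K S k).PosSemidef := by
  induction k with
  | zero => exact h
  | succ k ih =>
    rw [covSeq, covSeq, add_sub_add_right_eq_sub]
    exact conj_mono ih _

/-- Remark 1, Reuse: a control sequence steering `(μ_I, Σ_I)` to `G`
also steers `(μ_I, Σ')` to `G` whenever `Σ' ⪯ Σ_I`. -/
theorem steers_reuse {n m : ℕ}
    (A : Matrix (Fin n) (Fin n) ℝ) (B : Matrix (Fin n) (Fin m) ℝ)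
    (D : Matrix (Fin n) (Fin n) ℝ) (sc : Scene n m) (N : ℕ)
    (K : ℕ → Matrix (Fin m) (Fin n) ℝ) (v : ℕ → Fin m → ℝ)
    (μI : Fin n → ℝ) (SI : Matrix (Fin n) (Fin n) ℝ)
    (μG : Fin n → ℝ) (SG : Matrix (Fin n) (Fin n) ℝ)
    (hSI : SI.PosSemidef) (hSG : SG.PosSemidef)
    (hsteer : Steers A B D sc N K v μI SI μG SG) :
    ∀ S' : Matrix (Fin n) (Fin n) ℝ, S'.PosSemidef → (SI - S').PosSemidef →
      Steers A B D sc N K v μI S' μG SG := by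
  intro S' hS' hle
  obtain ⟨hx, hu, hm, hl⟩ := hsteer
  refine ⟨fun k hk => ?_, fun k hk => ?_, hm, ?_⟩
  · refine le_trans ?_ (hx k hk)
    have := mul_le_mul_of_nonneg_left
      (Real.sqrt_le_sqrt (quad_mono (covSeq_mono A B D K hle k) sc.ax)) sc.cx_nonneg
    linarith
  · refine le_trans ?_ (hu k hk)
    have := mul_le_mul_of_nonneg_left
      (Real.sqrt_le_sqrt (quad_mono (conj_mono (covSeq_mono A B D K hle k) (K k)) sc.au))
      sc.cu_nonneg
    linarith
  · exact (lamMax_mono (covSeq_posSemidef A B D K hS' N).isHermitian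
      (covSeq_posSemidef A B D K hSI N).isHermitian (covSeq_mono A B D K hle N)).trans hl
end

section
/- Feasibility through sequential composition (Lemma 1): let p_i = (μ_i, Σ_i), p_j = (μ_j, Σ_j), p_k = (μ_k, Σ_k) be pairs of means and real symmetric positive semidefinite covariances, let C_{i,j} be an N_{i,j}-step control sequence with p_i →_{N_{i,j}}^{C_{i,j}} p_j, and let C_{j,k} be an N_{j,k}-step control sequence with p_j →_{N_{j,k}}^{C_{j,k}} p_k. Then the concatenated (N_{i,j}+N_{j,k})-step control sequence C_{i,k} = C_{i,j} ∪ C_{j,k} (which applies C_{i,j} for the first N_{i,j} steps and then C_{j,k}) satisfies p_i →_{N_{i,j}+N_{j,k}}^{C_{i,k}} p_k. -/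
open Matrix

theorem aux_psd_iff {n : ℕ} {M : Matrix (Fin n) (Fin n) ℝ} (h : M.IsHermitian) :
    M.PosSemidef ↔ ∀ x ∈ spectrum ℝ M, 0 ≤ x := by
  rw [h.posSemidef_iff_eigenvalues_nonneg, h.spectrum_real_eq_range_eigenvalues]
  simp [Pi.le_def]

theorem aux_alg_herm {n : ℕ} (c : ℝ) :
    (algebraMap ℝ (Matrix (Fin n) (Fin n) ℝ) c).IsHermitian := by
  rw [Algebra.algebraMap_eq_smul_one, Matrix.IsHermitian]
  simp

theorem aux_upper {n : ℕ} {M : Matrix (Fin n) (Fin n) ℝ} (h : M.IsHermitian) (c : ℝ) :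
    (algebraMap ℝ (Matrix (Fin n) (Fin n) ℝ) c - M).PosSemidef ↔ ∀ i, h.eigenvalues i ≤ c := by
  rw [aux_psd_iff ((aux_alg_herm c).sub h), ← spectrum.singleton_sub_eq,
    h.spectrum_real_eq_range_eigenvalues]
  simp

theorem aux_lower {n : ℕ} {M : Matrix (Fin n) (Fin n) ℝ} (h : M.IsHermitian) (c : ℝ) :
    (M - algebraMap ℝ (Matrix (Fin n) (Fin n) ℝ) c).PosSemidef ↔ ∀ i, c ≤ h.eigenvalues i := by
  rw [aux_psd_iff (h.sub (aux_alg_herm c)), ← spectrum.sub_singleton_eq,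
    h.spectrum_real_eq_range_eigenvalues]
  simp

theorem aux_lamMax {n : ℕ} {M : Matrix (Fin n) (Fin n) ℝ} (h : M.IsHermitian) :
    (algebraMap ℝ (Matrix (Fin n) (Fin n) ℝ) (lamMax M) - M).PosSemidef := by
  rw [aux_upper h, lamMax, dif_pos h]
  exact fun i => le_ciSup (Set.finite_range _).bddAbove i

theorem aux_lamMin {n : ℕ} {M : Matrix (Fin n) (Fin n) ℝ} (h : M.IsHermitian) :
    (M - algebraMap ℝ (Matrix (Fin n) (Fin n) ℝ) (lamMin M)).PosSemidef := by
  rw [aux_lower h, lamMin, dif_pos h]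
  exact fun i => ciInf_le (Set.finite_range _).bddBelow i

theorem aux_loewner {n : ℕ} {M S : Matrix (Fin n) (Fin n) ℝ} (hM : M.IsHermitian)
    (hS : S.IsHermitian) (h : lamMax M ≤ lamMin S) : (S - M).PosSemidef := by
  have h1 := (aux_upper hM (lamMin S)).2
    fun i => ((aux_upper hM _).1 (aux_lamMax hM) i).trans h
  simpa using (aux_lamMin hS).add h1

theorem aux_lamMax_mono {n : ℕ} {M S : Matrix (Fin n) (Fin n) ℝ} (hM : M.IsHermitian)
    (hS : S.IsHermitian) (h : (S - M).PosSemidef) : lamMax M ≤ lamMax S := by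
  have h1 : (algebraMap ℝ (Matrix (Fin n) (Fin n) ℝ) (lamMax S) - M).PosSemidef := by
    simpa using (aux_lamMax hS).add h
  rw [aux_upper hM] at h1
  rcases isEmpty_or_nonempty (Fin n) with hn | hn
  · simp [lamMax, hM, hS]
  · conv_lhs => rw [lamMax, dif_pos hM]
    exact ciSup_le h1

theorem aux_conj {n m : ℕ} {M : Matrix (Fin n) (Fin n) ℝ} (hM : M.PosSemidef)
    (F : Matrix (Fin m) (Fin n) ℝ) : (F * M * Fᵀ).PosSemidef := by
  simpa using hM.mul_mul_conjTranspose_same F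

theorem aux_quad {n : ℕ} {M S : Matrix (Fin n) (Fin n) ℝ} (h : (S - M).PosSemidef)
    (x : Fin n → ℝ) : x ⬝ᵥ M.mulVec x ≤ x ⬝ᵥ S.mulVec x := by
  have := h.dotProduct_mulVec_nonneg x
  simpa [Matrix.sub_mulVec, dotProduct_sub] using this

section
variable {n m : ℕ} (A : Matrix (Fin n) (Fin n) ℝ) (B : Matrix (Fin n) (Fin m) ℝ)
  (D : Matrix (Fin n) (Fin n) ℝ)

theorem aux_cov_psd (K : ℕ → Matrix (Fin m) (Fin n) ℝ) {S : Matrix (Fin n) (Fin n) ℝ}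
    (hS : S.PosSemidef) (k : ℕ) : (covSeq A B D K S k).PosSemidef := by
  induction k with
  | zero => exact hS
  | succ k ih =>
    refine (aux_conj ih _).add ?_
    simpa using Matrix.posSemidef_self_mul_conjTranspose D

theorem aux_cov_mono (K : ℕ → Matrix (Fin m) (Fin n) ℝ) {M S : Matrix (Fin n) (Fin n) ℝ}
    (h : (S - M).PosSemidef) (k : ℕ) :
    (covSeq A B D K S k - covSeq A B D K M k).PosSemidef := by
  induction k with
  | zero => exact h
  | succ k ih =>
    have := aux_conj ih (A + B * K k)
    rw [Matrix.mul_sub, Matrix.sub_mul] at this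
    simpa only [covSeq, add_sub_add_right_eq_sub] using this

theorem aux_cov_left (N : ℕ) (f g : ℕ → Matrix (Fin m) (Fin n) ℝ)
    (S : Matrix (Fin n) (Fin n) ℝ) (k : ℕ) (hk : k ≤ N) :
    covSeq A B D (concatSeq N f g) S k = covSeq A B D f S k := by
  induction k with
  | zero => rfl
  | succ k ih =>
    have h : concatSeq N f g k = f k := if_pos hk
    simp only [covSeq, h, ih (Nat.le_of_succ_le hk)]

theorem aux_mean_left (N : ℕ) (f g : ℕ → Fin m → ℝ) (x : Fin n → ℝ) (k : ℕ) (hk : k ≤ N) :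
    meanSeq A B (concatSeq N f g) x k = meanSeq A B f x k := by
  induction k with
  | zero => rfl
  | succ k ih =>
    have h : concatSeq N f g k = f k := if_pos hk
    simp only [meanSeq, h, ih (Nat.le_of_succ_le hk)]

theorem aux_concat_right {α : Type*} (N : ℕ) (f g : ℕ → α) (k : ℕ) :
    concatSeq N f g (N + k) = g k := by
  simp [concatSeq]

theorem aux_cov_right (N : ℕ) (f g : ℕ → Matrix (Fin m) (Fin n) ℝ)
    (S : Matrix (Fin n) (Fin n) ℝ) (k : ℕ) :
    covSeq A B D (concatSeq N f g) S (N + k) = covSeq A B D g (covSeq A B D f S N) k := by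
  induction k with
  | zero => exact aux_cov_left A B D N f g S N le_rfl
  | succ k ih => rw [← Nat.add_assoc]; simp only [covSeq, aux_concat_right, ih]

theorem aux_mean_right (N : ℕ) (f g : ℕ → Fin m → ℝ) (x : Fin n → ℝ) (k : ℕ) :
    meanSeq A B (concatSeq N f g) x (N + k) = meanSeq A B g (meanSeq A B f x N) k := by
  induction k with
  | zero => exact aux_mean_left A B N f g x N le_rfl
  | succ k ih => rw [← Nat.add_assoc]; simp only [meanSeq, aux_concat_right, ih]
end

/-- Lemma 1, Feasibility through Sequential Composition. -/
theorem steers_concat {n m : ℕ}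
    (A : Matrix (Fin n) (Fin n) ℝ) (B : Matrix (Fin n) (Fin m) ℝ)
    (D : Matrix (Fin n) (Fin n) ℝ) (sc : Scene n m)
    (μi : Fin n → ℝ) (Si : Matrix (Fin n) (Fin n) ℝ)
    (μj : Fin n → ℝ) (Sj : Matrix (Fin n) (Fin n) ℝ)
    (μk : Fin n → ℝ) (Sk : Matrix (Fin n) (Fin n) ℝ)
    (hSi : Si.PosSemidef) (hSj : Sj.PosSemidef) (hSk : Sk.PosSemidef)
    (Nij Njk : ℕ)
    (Kij : ℕ → Matrix (Fin m) (Fin n) ℝ) (vij : ℕ → Fin m → ℝ)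
    (Kjk : ℕ → Matrix (Fin m) (Fin n) ℝ) (vjk : ℕ → Fin m → ℝ)
    (hij : Steers A B D sc Nij Kij vij μi Si μj Sj)
    (hjk : Steers A B D sc Njk Kjk vjk μj Sj μk Sk) :
    Steers A B D sc (Nij + Njk) (concatSeq Nij Kij Kjk) (concatSeq Nij vij vjk)
      μi Si μk Sk := by
  obtain ⟨hx, hu, hm, hl⟩ := hij
  obtain ⟨hx', hu', hm', hl'⟩ := hjk
  have hN := aux_cov_psd A B D Kij hSi Nij
  have hle := aux_loewner hN.isHermitian hSj.isHermitian hl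
  have hmono := aux_cov_mono A B D Kjk hle
  refine ⟨fun k hk => ?_, fun k hk => ?_, ?_, ?_⟩
  · rcases lt_or_ge k Nij with h | h
    · rw [aux_cov_left _ _ _ _ _ _ _ _ h.le, aux_mean_left _ _ _ _ _ _ _ h.le]
      exact hx k h
    · obtain ⟨l, rfl⟩ := Nat.exists_eq_add_of_le h
      rw [aux_cov_right, aux_mean_right, hm]
      refine le_trans ?_ (hx' l (by omega))
      have h1 := mul_le_mul_of_nonneg_left
        (Real.sqrt_le_sqrt (aux_quad (hmono l) sc.ax)) sc.cx_nonneg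
      linarith
  · rcases lt_or_ge k Nij with h | h
    · have e1 : concatSeq Nij Kij Kjk k = Kij k := if_pos h
      have e2 : concatSeq Nij vij vjk k = vij k := if_pos h
      rw [aux_cov_left _ _ _ _ _ _ _ _ h.le, e1, e2]
      exact hu k h
    · obtain ⟨l, rfl⟩ := Nat.exists_eq_add_of_le h
      rw [aux_cov_right, aux_concat_right, aux_concat_right]
      refine le_trans ?_ (hu' l (by omega))
      have h2 := aux_conj (hmono l) (Kjk l)
      rw [Matrix.mul_sub, Matrix.sub_mul] at h2
      have h1 := mul_le_mul_of_nonneg_left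
        (Real.sqrt_le_sqrt (aux_quad h2 sc.au)) sc.cu_nonneg
      linarith
  · rw [aux_mean_right, hm, hm']
  · rw [aux_cov_right]
    exact (aux_lamMax_mono (aux_cov_psd A B D Kjk hN Njk).isHermitian
      (aux_cov_psd A B D Kjk hSj Njk).isHermitian (hmono Njk)).trans hl'
end

section
/- Sufficient condition for the perturbed control chance constraint: let Σ_q be real symmetric positive semidefinite, let C be an N-step control sequence with gains K̃_k and feedforward terms v_k, and let γ_k be defined by γ_0 = I and γ_{k+1} = (A + B K̃_k) γ_k (A + B K̃_k)^T. If ε ≥ 0 satisfies c_u √(α_u^T K̃_k Σ_k(Σ_q, C) K̃_k^T α_u) + c_u √ε √(α_u^T K̃_k γ_k K̃_k^T α_u) + α_u^T v_k ≤ β_u, then the control chance constraint holds at step k for the covariance initialized at Σ_q + εI under C, i.e. c_u √(α_u^T K̃_k Σ_k(Σ_q + εI, C) K̃_k^T α_u) + α_u^T v_k ≤ β_u. -/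
open Matrix

/-- sufficient condition for the perturbed control chance
constraint. `K` and `v` are the gains and feedforward terms of `C`. -/
theorem perturbed_control_chance_constraint {n m : ℕ}
    (A : Matrix (Fin n) (Fin n) ℝ) (B : Matrix (Fin n) (Fin m) ℝ)
    (D : Matrix (Fin n) (Fin n) ℝ)
    (au : Fin m → ℝ) (bu cu : ℝ) (hcu : 0 ≤ cu)
    (Sq : Matrix (Fin n) (Fin n) ℝ) (hSq : Sq.PosSemidef)
    (N : ℕ) (K : ℕ → Matrix (Fin m) (Fin n) ℝ) (v : ℕ → Fin m → ℝ)
    (k : ℕ) (hk : k < N) (ε : ℝ) (hε : 0 ≤ ε)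
    (hcond : cu * Real.sqrt (au ⬝ᵥ (K k * covSeq A B D K Sq k * (K k)ᵀ).mulVec au)
        + cu * Real.sqrt ε * Real.sqrt (au ⬝ᵥ (K k * gammaSeq A B K k * (K k)ᵀ).mulVec au)
        + au ⬝ᵥ v k ≤ bu) :
    cu * Real.sqrt (au ⬝ᵥ (K k * covSeq A B D K
        (Sq + ε • (1 : Matrix (Fin n) (Fin n) ℝ)) k * (K k)ᵀ).mulVec au)
      + au ⬝ᵥ v k ≤ bu := by
  have hs : ∀ a b : ℝ, Real.sqrt (a + b) ≤ Real.sqrt a + Real.sqrt b := by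
    intro a b
    rcases le_total a 0 with ha | ha
    · have h := Real.sqrt_le_sqrt (show a + b ≤ b by linarith)
      linarith [Real.sqrt_nonneg a]
    rcases le_total b 0 with hb | hb
    · have h := Real.sqrt_le_sqrt (show a + b ≤ a by linarith)
      linarith [Real.sqrt_nonneg b]
    apply Real.sqrt_le_iff.mpr
    refine ⟨by positivity, ?_⟩
    nlinarith [Real.sq_sqrt ha, Real.sq_sqrt hb,
      mul_nonneg (Real.sqrt_nonneg a) (Real.sqrt_nonneg b)]
  have hcov : ∀ j, covSeq A B D K (Sq + ε • (1 : Matrix (Fin n) (Fin n) ℝ)) j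
      = covSeq A B D K Sq j + ε • gammaSeq A B K j := by
    intro j
    induction j with
    | zero => rfl
    | succ j ih =>
      simp only [covSeq, gammaSeq, ih, Matrix.mul_add, Matrix.add_mul, Matrix.mul_smul,
        Matrix.smul_mul]
      abel
  have hq : au ⬝ᵥ (K k * covSeq A B D K
        (Sq + ε • (1 : Matrix (Fin n) (Fin n) ℝ)) k * (K k)ᵀ).mulVec au
      = au ⬝ᵥ (K k * covSeq A B D K Sq k * (K k)ᵀ).mulVec au
        + ε * (au ⬝ᵥ (K k * gammaSeq A B K k * (K k)ᵀ).mulVec au) := by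
    rw [hcov, Matrix.mul_add, Matrix.add_mul, Matrix.mul_smul, Matrix.smul_mul,
      Matrix.add_mulVec, Matrix.smul_mulVec, dotProduct_add, dotProduct_smul, smul_eq_mul]
  rw [hq]
  have h := mul_le_mul_of_nonneg_left (hs (au ⬝ᵥ (K k * covSeq A B D K Sq k * (K k)ᵀ).mulVec au)
    (ε * (au ⬝ᵥ (K k * gammaSeq A B K k * (K k)ᵀ).mulVec au))) hcu
  rw [Real.sqrt_mul hε, mul_add, ← mul_assoc] at h
  linarith
end

section
/- One-step strict Loewner decrease under gain scaling (equations (31)–(33)): let Σ be a real symmetric positive semidefinite n×n matrix, K ∈ ℝ^{m×n} a feedback gain, and set S = (BK) Σ (BK)^T and M = (BK) Σ (A + BK)^T + (A + BK) Σ (BK)^T. If λ_0 > 0 satisfies λ_0 λ_max(S) < λ_min(M), then (A + (1 − λ_0) BK) Σ (A + (1 − λ_0) BK)^T + D D^T ≺ (A + BK) Σ (A + BK)^T + D D^T, i.e. the difference is positive definite. -/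
open Matrix

theorem aux_posSemidef_min {n : ℕ} (M : Matrix (Fin n) (Fin n) ℝ) (h : M.IsHermitian) :
    (M - lamMin M • (1 : Matrix (Fin n) (Fin n) ℝ)).PosSemidef := by
  rw [Matrix.posSemidef_iff_isHermitian_and_spectrum_nonneg]
  refine ⟨h.sub (by simp [Matrix.IsHermitian]), ?_⟩
  intro x hx
  rw [← Algebra.algebraMap_eq_smul_one, ← spectrum.sub_singleton_eq,
    h.spectrum_real_eq_range_eigenvalues] at hx
  obtain ⟨_, ⟨i, rfl⟩, _, rfl, rfl⟩ := hx
  have : lamMin M ≤ h.eigenvalues i := by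
    rw [lamMin, dif_pos h]
    exact ciInf_le (Set.finite_range _).bddBelow i
  simpa using this

theorem aux_posSemidef_max {n : ℕ} (M : Matrix (Fin n) (Fin n) ℝ) (h : M.IsHermitian) :
    (lamMax M • (1 : Matrix (Fin n) (Fin n) ℝ) - M).PosSemidef := by
  rw [Matrix.posSemidef_iff_isHermitian_and_spectrum_nonneg]
  refine ⟨Matrix.IsHermitian.sub (by simp [Matrix.IsHermitian]) h, ?_⟩
  intro x hx
  rw [← Algebra.algebraMap_eq_smul_one, ← spectrum.singleton_sub_eq,
    h.spectrum_real_eq_range_eigenvalues] at hx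
  obtain ⟨_, rfl, _, ⟨i, rfl⟩, rfl⟩ := hx
  have : h.eigenvalues i ≤ lamMax M := by
    rw [lamMax, dif_pos h]
    exact le_ciSup (Set.finite_range _).bddAbove i
  simpa using this

/-- equations (31)–(33): one-step strict Loewner decrease under
gain scaling. -/
theorem one_step_strict_loewner_decrease {n m : ℕ}
    (A : Matrix (Fin n) (Fin n) ℝ) (B : Matrix (Fin n) (Fin m) ℝ)
    (D : Matrix (Fin n) (Fin n) ℝ)
    (S : Matrix (Fin n) (Fin n) ℝ) (hS : S.PosSemidef)
    (K : Matrix (Fin m) (Fin n) ℝ) (lam0 : ℝ) (hlam0 : 0 < lam0)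
    (hcond : lam0 * lamMax ((B * K) * S * (B * K)ᵀ)
        < lamMin ((B * K) * S * (A + B * K)ᵀ + (A + B * K) * S * (B * K)ᵀ)) :
    (((A + B * K) * S * (A + B * K)ᵀ + D * Dᵀ)
      - ((A + (1 - lam0) • (B * K)) * S * (A + (1 - lam0) • (B * K))ᵀ + D * Dᵀ)).PosDef := by
  have hSt : Sᵀ = S := by simpa [Matrix.IsHermitian] using hS.1
  set Y := B * K with hY
  set X := A + Y with hX
  have hA : A + (1 - lam0) • Y = X - lam0 • Y := by
    rw [hX, sub_smul, one_smul]; abel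
  rw [hA]
  have h1 : (Y * S * Yᵀ).IsHermitian := by
    simp [Matrix.IsHermitian, Matrix.transpose_mul, hSt, Matrix.mul_assoc]
  have h2 : (Y * S * Xᵀ + X * S * Yᵀ).IsHermitian := by
    simp only [Matrix.IsHermitian, Matrix.conjTranspose_eq_transpose_of_trivial,
      Matrix.transpose_add, Matrix.transpose_mul, Matrix.transpose_transpose, hSt,
      Matrix.mul_assoc]
    exact add_comm _ _
  have p1 := aux_posSemidef_max _ h1
  have p2 := aux_posSemidef_min _ h2
  generalize lamMax (Y * S * Yᵀ) = a at *
  generalize lamMin (Y * S * Xᵀ + X * S * Yᵀ) = b at *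
  have p3 : ((b - lam0 * a) • (1 : Matrix (Fin n) (Fin n) ℝ)).PosDef :=
    Matrix.PosDef.one.smul (sub_pos.2 hcond)
  have p4 := ((p3.add_posSemidef p2).add_posSemidef (p1.smul hlam0.le)).smul hlam0
  convert p4 using 1
  simp only [Matrix.transpose_sub, Matrix.transpose_smul, Matrix.sub_mul, Matrix.mul_sub,
    Matrix.smul_mul, Matrix.mul_smul]
  module
end

section
/- Multi-step Loewner dominance under gain scaling (equations (34)–(35)): let Σ_q be real symmetric positive semidefinite, let C_q be an N-step control sequence with gains K_k, and let C(λ) be the control sequence with the same feedforward terms and scaled gains K_k(C(λ)) = (1 − λ_k) K_k for scalars λ_k ≥ 0. Suppose for each k = 0, …, N−1, with S_k = (B K_k) Σ_k(Σ_q, C_q) (B K_k)^T and M_k = (B K_k) Σ_k(Σ_q, C_q) (A + B K_k)^T + (A + B K_k) Σ_k(Σ_q, C_q) (B K_k)^T, the scalar λ_k satisfies λ_k λ_max(S_k) ≤ λ_min(M_k). Then Σ_k(Σ_q, C(λ)) ⪯ Σ_k(Σ_q, C_q) for every k = 0, 1, …, N. -/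
open Matrix

open scoped MatrixOrder in
theorem aux_lamMin_sub_posSemidef {n : ℕ} (M : Matrix (Fin n) (Fin n) ℝ) (hM : M.IsHermitian) :
    (M - lamMin M • (1 : Matrix (Fin n) (Fin n) ℝ)).PosSemidef := by
  have h : algebraMap ℝ (Matrix (Fin n) (Fin n) ℝ) (lamMin M) ≤ M := by
    rw [algebraMap_le_iff_le_spectrum (R := ℝ) (show IsSelfAdjoint M from hM)]
    intro x hx
    rw [hM.spectrum_real_eq_range_eigenvalues] at hx
    obtain ⟨i, rfl⟩ := hx
    rw [lamMin, dif_pos hM]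
    exact ciInf_le (Set.finite_range _).bddBelow i
  rw [Matrix.le_iff, Algebra.algebraMap_eq_smul_one] at h
  exact h

open scoped MatrixOrder in
theorem aux_lamMax_sub_posSemidef {n : ℕ} (M : Matrix (Fin n) (Fin n) ℝ) (hM : M.IsHermitian) :
    (lamMax M • (1 : Matrix (Fin n) (Fin n) ℝ) - M).PosSemidef := by
  have h : M ≤ algebraMap ℝ (Matrix (Fin n) (Fin n) ℝ) (lamMax M) := by
    rw [le_algebraMap_iff_spectrum_le (R := ℝ) (show IsSelfAdjoint M from hM)]
    intro x hx
    rw [hM.spectrum_real_eq_range_eigenvalues] at hx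
    obtain ⟨i, rfl⟩ := hx
    rw [lamMax, dif_pos hM]
    exact le_ciSup (Set.finite_range _).bddAbove i
  rw [Matrix.le_iff, Algebra.algebraMap_eq_smul_one] at h
  exact h

theorem aux_conj_posSemidef {n : ℕ} (F S : Matrix (Fin n) (Fin n) ℝ) (hS : S.PosSemidef) :
    (F * S * Fᵀ).PosSemidef := by
  have := hS.mul_mul_conjTranspose_same F
  rwa [conjTranspose_eq_transpose_of_trivial] at this

theorem aux_covSeq_posSemidef {n m : ℕ} (A : Matrix (Fin n) (Fin n) ℝ)
    (B : Matrix (Fin n) (Fin m) ℝ) (D : Matrix (Fin n) (Fin n) ℝ)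
    (K : ℕ → Matrix (Fin m) (Fin n) ℝ) (S0 : Matrix (Fin n) (Fin n) ℝ) (h0 : S0.PosSemidef)
    (k : ℕ) : (covSeq A B D K S0 k).PosSemidef := by
  induction k with
  | zero => exact h0
  | succ k ih =>
    refine (aux_conj_posSemidef _ _ ih).add ?_
    have := posSemidef_self_mul_conjTranspose D
    rwa [conjTranspose_eq_transpose_of_trivial] at this

theorem aux_step {n : ℕ} (F G S T : Matrix (Fin n) (Fin n) ℝ) (l : ℝ) (hS : S.PosSemidef)
    (hST : (S - T).PosSemidef) (hl : 0 ≤ l)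
    (hc : l * lamMax (G * S * Gᵀ) ≤ lamMin (G * S * Fᵀ + F * S * Gᵀ)) :
    (F * S * Fᵀ - (F - l • G) * T * (F - l • G)ᵀ).PosSemidef := by
  have hSt : Sᵀ = S := by
    have := hS.isHermitian
    rwa [IsHermitian, conjTranspose_eq_transpose_of_trivial] at this
  have hM : (G * S * Fᵀ + F * S * Gᵀ).IsHermitian := by
    rw [IsHermitian, conjTranspose_eq_transpose_of_trivial]
    simp only [transpose_add, transpose_mul, transpose_transpose, hSt, Matrix.mul_assoc]
    exact add_comm _ _
  have h1 := aux_lamMin_sub_posSemidef _ hM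
  have h2 := aux_lamMax_sub_posSemidef _ (aux_conj_posSemidef G S hS).isHermitian
  have h3 := (PosSemidef.one (n := Fin n) (R := ℝ)).smul (sub_nonneg.2 hc)
  have h4 := ((h1.add (h2.smul hl)).add h3).smul hl
  have h5 := (aux_conj_posSemidef (F - l • G) _ hST).add h4
  convert h5 using 1
  generalize lamMax (G * S * Gᵀ) = a
  generalize lamMin (G * S * Fᵀ + F * S * Gᵀ) = b
  simp only [transpose_sub, transpose_smul, Matrix.mul_sub, Matrix.sub_mul, Matrix.smul_mul,
    Matrix.mul_smul, smul_sub, smul_add, smul_smul, sub_smul]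
  module

/-- equations (34)–(35): multi-step Loewner dominance under gain
scaling `K_k(C(λ)) = (1 - λ_k) K_k`. -/
theorem multi_step_loewner_dominance {n m : ℕ}
    (A : Matrix (Fin n) (Fin n) ℝ) (B : Matrix (Fin n) (Fin m) ℝ)
    (D : Matrix (Fin n) (Fin n) ℝ)
    (Sq : Matrix (Fin n) (Fin n) ℝ) (hSq : Sq.PosSemidef)
    (N : ℕ) (K : ℕ → Matrix (Fin m) (Fin n) ℝ) (lam : ℕ → ℝ)
    (hlam : ∀ k < N, 0 ≤ lam k)
    (hcond : ∀ k < N,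
      lam k * lamMax ((B * K k) * covSeq A B D K Sq k * (B * K k)ᵀ)
        ≤ lamMin ((B * K k) * covSeq A B D K Sq k * (A + B * K k)ᵀ
            + (A + B * K k) * covSeq A B D K Sq k * (B * K k)ᵀ)) :
    ∀ k ≤ N, (covSeq A B D K Sq k
        - covSeq A B D (fun k => (1 - lam k) • K k) Sq k).PosSemidef := by
  intro k
  induction k with
  | zero => intro _; simpa [covSeq] using PosSemidef.zero
  | succ k ih =>
    intro hk
    have hk' : k < N := hk
    have key := aux_step (A + B * K k) (B * K k) _ _ (lam k)
      (aux_covSeq_posSemidef A B D K Sq hSq k) (ih hk'.le) (hlam k hk') (hcond k hk')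
    have e : A + B * ((1 - lam k) • K k) = A + B * K k - lam k • (B * K k) := by
      rw [Matrix.mul_smul, sub_smul, one_smul]; abel
    simp only [covSeq]
    rw [e, add_sub_add_right_eq_sub]
    exact key
end
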